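/- Let 0 < v ≤ 1/2 and 0 < ρ < 1. Let W = (W¹, W²) where W¹, W² are independent centered normal random variables with variance ρ/(1−ρ). For w ∈ ℝ² define g_w(v) = P(|Y| ≤ √(v/(1−v))·|X|) where X ~ N(w¹,1), Y ~ N(w²,1) are independent. Then P(g_W(v) > 1/2) > (1/(2π))·√(v/(1−v))·e^{−(8(1−ρ)/ρ)·((1−v)/v)}. -/

import Mathlib

open MeasureTheory ProbabilityTheory Real

noncomputable section

/-- `g_w(v)`: the probability that a 2-dimensional Gaussian with mean `w = (w¹,w²)` and identity
covariance lies in the double cone `A_v = {(x,y) : |y| ≤ √(v/(1-v))·|x|}`. -/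
def gCone (w1 w2 v : ℝ) : ℝ :=
  (((gaussianReal w1 1).prod (gaussianReal w2 1))
      {p : ℝ × ℝ | |p.2| ≤ √(v / (1 - v)) * |p.1|}).toReal

/-!
In polar coordinates `(r ^ 2, φ)`, a centered Gaussian vector of covariance `s • I₂` is a pair of
independent variables, `r ^ 2` exponential of rate `1 / (2 * s)` and `φ` uniform on `(-π, π)`.
Write `k = √(v / (1 - v)) ≤ 1`.

If `|w²| ≤ k * |w¹| - 2`, then translating by `w` maps the disc `x ^ 2 + y ^ 2 ≤ 2` into the cone
`|y| ≤ k * |x|`, and the standard Gaussian measure of that disc is `1 - exp (-1) > 1 / 2`. Hence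
`g_w(v) > 1 / 2` for such `w`.

The condition on `w` holds as soon as `r > 4 / k` and `|sin φ| ≤ k * |cos φ| - k / 2`; the latter
is true for `φ` within `3 * k / 8` of `0` or `π`. These angles include a set of length
`9 * k / 8 > k`, and `r > 4 / k` has probability `exp (-8 / (s * k ^ 2))`.
-/

open Set
open scoped ENNReal NNReal

lemma polarCoord_symm_polarCoord (p : ℝ × ℝ) : polarCoord.symm (polarCoord p) = p := by
  have norm_eq : √(p.1 ^ 2 + p.2 ^ 2) = ‖Complex.equivRealProd.symm p‖ := by
    simp [Complex.norm_eq_sqrt_sq_add_sq]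
  rw [polarCoord_symm_apply, polarCoord_apply, norm_eq, Complex.norm_mul_cos_arg,
    Complex.norm_mul_sin_arg]
  exact Complex.equivRealProd.apply_symm_apply p

lemma measurable_polarCoord : Measurable polarCoord := by
  have : Measurable Complex.equivRealProd.symm := Complex.measurableEquivRealProd.symm.measurable
  exact Measurable.prodMk (by fun_prop) (Complex.measurable_arg.comp this)

/-- The polar coordinates `(r ^ 2, φ)` of a point of the plane, with the radius squared so that its
law under a Gaussian measure is exponential; `φ` is `Complex.arg`, valued in `(-π, π]`. -/
def sqPolarCoord (p : ℝ × ℝ) : ℝ × ℝ :=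
  (p.1 ^ 2 + p.2 ^ 2, (polarCoord p).2)

lemma measurable_sqPolarCoord : Measurable sqPolarCoord :=
  Measurable.prodMk (by fun_prop) measurable_polarCoord.snd

lemma sqPolarCoord_polarCoord_symm {q : ℝ × ℝ} (hq : q ∈ polarCoord.target) :
    sqPolarCoord (polarCoord.symm q) = (q.1 ^ 2, q.2) := by
  have hsq : (q.1 * cos q.2) ^ 2 + (q.1 * sin q.2) ^ 2 = q.1 ^ 2 := by
    linear_combination q.1 ^ 2 * cos_sq_add_sin_sq q.2
  rw [sqPolarCoord, polarCoord.right_inv hq]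
  simp only [polarCoord_symm_apply, hsq]

lemma eq_sqrt_mul_cos_sin_sqPolarCoord (p : ℝ × ℝ) :
    p = (√(sqPolarCoord p).1 * cos (sqPolarCoord p).2,
      √(sqPolarCoord p).1 * sin (sqPolarCoord p).2) :=
  (polarCoord_symm_polarCoord p).symm

lemma image_sq_Ioi_zero : (fun r : ℝ => r ^ 2) '' Ioi 0 = Ioi 0 := by
  ext u
  constructor
  · rintro ⟨r, hr, rfl⟩
    exact pow_pos (mem_Ioi.1 hr) 2
  · exact fun hu => ⟨√u, sqrt_pos.2 hu, sq_sqrt (le_of_lt hu)⟩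

lemma lintegral_Ioi_ofReal_mul_comp_sq (f : ℝ → ℝ≥0∞) :
    ∫⁻ r in Ioi 0, ENNReal.ofReal r * f (r ^ 2) = 2⁻¹ * ∫⁻ u in Ioi 0, f u := by
  have mono : MonotoneOn (fun r : ℝ => r ^ 2) (Ioi 0) :=
    fun _ hr _ _ hrs => pow_le_pow_left₀ (le_of_lt hr) hrs 2
  have subst := lintegral_image_eq_lintegral_deriv_mul_of_monotoneOn measurableSet_Ioi
    (fun r _ => (hasDerivAt_pow 2 r).hasDerivWithinAt) mono f
  rw [image_sq_Ioi_zero] at subst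
  rw [subst, ← lintegral_const_mul' _ _ (by simp)]
  refine lintegral_congr fun r => ?_
  simp [ENNReal.ofReal_mul, ← mul_assoc, ENNReal.inv_mul_cancel]

lemma lintegral_mul_comp_sqPolarCoord {f g : ℝ → ℝ≥0∞} (hf : Measurable f) (hg : Measurable g) :
    ∫⁻ p, f (sqPolarCoord p).1 * g (sqPolarCoord p).2 =
      (2⁻¹ * ∫⁻ u in Ioi 0, f u) * ∫⁻ θ in Ioo (-π) π, g θ :=
  calc ∫⁻ p, f (sqPolarCoord p).1 * g (sqPolarCoord p).2
    _ = ∫⁻ q in Ioi (0 : ℝ) ×ˢ Ioo (-π) π, (ENNReal.ofReal q.1 * f (q.1 ^ 2)) * g q.2 := by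
      rw [← lintegral_comp_polarCoord_symm]
      refine setLIntegral_congr_fun (measurableSet_Ioi.prod measurableSet_Ioo) fun q hq => ?_
      simp only [sqPolarCoord_polarCoord_symm hq, smul_eq_mul, mul_assoc]
    _ = (∫⁻ r in Ioi 0, ENNReal.ofReal r * f (r ^ 2)) * ∫⁻ θ in Ioo (-π) π, g θ := by
      rw [Measure.volume_eq_prod, ← Measure.prod_restrict]
      exact lintegral_prod_mul (f := fun r => ENNReal.ofReal r * f (r ^ 2))
        (by fun_prop) hg.aemeasurable
    _ = (2⁻¹ * ∫⁻ u in Ioi 0, f u) * ∫⁻ θ in Ioo (-π) π, g θ := by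
      rw [lintegral_Ioi_ofReal_mul_comp_sq]

lemma measurable_exponentialPDF (r : ℝ) : Measurable (exponentialPDF r) :=
  (measurable_exponentialPDFReal r).ennreal_ofReal

lemma expMeasure_apply (r : ℝ) {A : Set ℝ} (hA : MeasurableSet A) :
    expMeasure r A = ∫⁻ u in Ioi 0, A.indicator (exponentialPDF r) u := by
  have support_subset : (A.indicator (exponentialPDF r)).support ⊆ Ici 0 := fun u hu => by
    by_contra hneg
    simp [exponentialPDF_of_neg (not_le.1 hneg)] at hu
  rw [setLIntegral_congr Ioi_ae_eq_Ici, setLIntegral_eq_of_support_subset support_subset]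
  exact (withDensity_apply _ hA).trans (lintegral_indicator hA _).symm

lemma expMeasure_Iic {r x : ℝ} (hr : 0 < r) (hx : 0 ≤ x) :
    expMeasure r (Iic x) = ENNReal.ofReal (1 - exp (-(r * x))) := by
  have := isProbabilityMeasure_expMeasure hr
  rw [← ofReal_cdf, cdf_expMeasure_eq hr, if_pos hx]

lemma expMeasure_Ioi {r x : ℝ} (hr : 0 < r) (hx : 0 ≤ x) :
    expMeasure r (Ioi x) = ENNReal.ofReal (exp (-(r * x))) := by
  have := isProbabilityMeasure_expMeasure hr
  have hexp : exp (-(r * x)) ≤ 1 := exp_le_one_iff.2 (by nlinarith)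
  rw [← compl_Iic, prob_compl_eq_one_sub measurableSet_Iic, expMeasure_Iic hr hx,
    ← ENNReal.ofReal_one, ← ENNReal.ofReal_sub _ (by linarith), sub_sub_cancel]

lemma gaussianPDF_zero_mul_gaussianPDF_zero (s : ℝ≥0) (x y : ℝ) :
    gaussianPDF 0 s x * gaussianPDF 0 s y =
      ENNReal.ofReal π⁻¹ * exponentialPDF (2 * s)⁻¹ (x ^ 2 + y ^ 2) := by
  have norm_const : (√(2 * π * s))⁻¹ * (√(2 * π * s))⁻¹ = π⁻¹ * (2 * (s : ℝ))⁻¹ := by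
    rw [← mul_inv, mul_self_sqrt (by positivity), ← mul_inv]
    ring
  rw [exponentialPDF_of_nonneg (by positivity), gaussianPDF, gaussianPDF,
    ← ENNReal.ofReal_mul (gaussianPDFReal_nonneg _ _ _), ← ENNReal.ofReal_mul (by positivity)]
  simp only [gaussianPDFReal, sub_zero]
  rw [mul_mul_mul_comm, norm_const, ← exp_add, mul_assoc]
  ring_nf

lemma gaussianReal_zero_prod_eq_withDensity {s : ℝ≥0} (hs : s ≠ 0) :
    (gaussianReal 0 s).prod (gaussianReal 0 s) = volume.withDensity fun p =>
      exponentialPDF (2 * s)⁻¹ (sqPolarCoord p).1 * ENNReal.ofReal π⁻¹ := by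
  rw [gaussianReal_of_var_ne_zero _ hs,
    prod_withDensity (measurable_gaussianPDF 0 s) (measurable_gaussianPDF 0 s),
    ← Measure.volume_eq_prod]
  simp only [gaussianPDF_zero_mul_gaussianPDF_zero, mul_comm, sqPolarCoord]

lemma volume_cond_Ioo_neg_pi_pi_apply (B : Set ℝ) :
    volume[B | Ioo (-π) π] = ENNReal.ofReal (2 * π)⁻¹ * volume (Ioo (-π) π ∩ B) := by
  rw [cond_apply measurableSet_Ioo, volume_Ioo, sub_neg_eq_add, ← two_mul,
    ENNReal.ofReal_inv_of_pos (by positivity)]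

theorem map_sqPolarCoord_gaussianReal_prod {s : ℝ≥0} (hs : s ≠ 0) :
    ((gaussianReal 0 s).prod (gaussianReal 0 s)).map sqPolarCoord =
      (expMeasure (2 * s)⁻¹).prod (volume[|Ioo (-π) π]) := by
  have := isProbabilityMeasure_expMeasure (r := (2 * (s : ℝ))⁻¹) (by positivity)
  refine (Measure.prod_eq fun A B hA hB => ?_).symm
  have hAB := measurable_sqPolarCoord (hA.prod hB)
  calc ((gaussianReal 0 s).prod (gaussianReal 0 s)).map sqPolarCoord (A ×ˢ B)
    _ = ∫⁻ p, A.indicator (exponentialPDF (2 * s)⁻¹) (sqPolarCoord p).1 *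
          B.indicator (fun _ => ENNReal.ofReal π⁻¹) (sqPolarCoord p).2 := by
      rw [Measure.map_apply measurable_sqPolarCoord (hA.prod hB),
        gaussianReal_zero_prod_eq_withDensity hs, withDensity_apply _ hAB,
        ← lintegral_indicator hAB]
      refine lintegral_congr fun p => ?_
      by_cases h₁ : (sqPolarCoord p).1 ∈ A <;> by_cases h₂ : (sqPolarCoord p).2 ∈ B <;>
        simp [indicator, h₁, h₂]
    _ = (2⁻¹ * expMeasure (2 * s)⁻¹ A) * (ENNReal.ofReal π⁻¹ * volume (Ioo (-π) π ∩ B)) := by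
      rw [lintegral_mul_comp_sqPolarCoord ((measurable_exponentialPDF _).indicator hA)
        (measurable_const.indicator hB), ← expMeasure_apply _ hA, lintegral_indicator_const hB,
        Measure.restrict_apply hB, inter_comm B]
    _ = expMeasure (2 * s)⁻¹ A * volume[B | Ioo (-π) π] := by
      rw [volume_cond_Ioo_neg_pi_pi_apply, mul_inv 2 π, ENNReal.ofReal_mul (by positivity),
        ENNReal.ofReal_inv_of_pos two_pos, ENNReal.ofReal_ofNat]
      ring

lemma gaussianReal_prod_preimage_sqPolarCoord {s : ℝ≥0} (hs : s ≠ 0) {A B : Set ℝ}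
    (hA : MeasurableSet A) (hB : MeasurableSet B) :
    ((gaussianReal 0 s).prod (gaussianReal 0 s)) (sqPolarCoord ⁻¹' (A ×ˢ B)) =
      expMeasure (2 * s)⁻¹ A * volume[B | Ioo (-π) π] := by
  rw [← Measure.map_apply measurable_sqPolarCoord (hA.prod hB),
    map_sqPolarCoord_gaussianReal_prod hs, Measure.prod_prod]

lemma gaussianReal_prod_disc {s : ℝ≥0} (hs : s ≠ 0) {c : ℝ} (hc : 0 ≤ c) :
    ((gaussianReal 0 s).prod (gaussianReal 0 s)) {p | p.1 ^ 2 + p.2 ^ 2 ≤ c} =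
      ENNReal.ofReal (1 - exp (-(c / (2 * s)))) := by
  have : IsProbabilityMeasure (volume[|Ioo (-π) π]) :=
    cond_isProbabilityMeasure_of_finite (by simp [pi_pos]) (by simp)
  have disc_eq : {p : ℝ × ℝ | p.1 ^ 2 + p.2 ^ 2 ≤ c} = sqPolarCoord ⁻¹' (Iic c ×ˢ univ) := by
    ext p
    simp [sqPolarCoord]
  rw [disc_eq, gaussianReal_prod_preimage_sqPolarCoord hs measurableSet_Iic .univ, measure_univ,
    mul_one, expMeasure_Iic (by positivity) hc, inv_mul_eq_div]

lemma half_lt_gaussianReal_prod_disc :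
    ENNReal.ofReal (1 / 2) <
      ((gaussianReal 0 1).prod (gaussianReal 0 1)) {p | p.1 ^ 2 + p.2 ^ 2 ≤ 2} := by
  have exp_lt : exp (-1) < 1 / 2 := by
    rw [exp_neg, inv_lt_comm₀ (exp_pos 1) (by norm_num)]
    simpa using exp_one_gt_two
  rw [gaussianReal_prod_disc one_ne_zero zero_le_two, NNReal.coe_one, mul_one,
    div_self two_ne_zero, ENNReal.ofReal_lt_ofReal_iff] <;> linarith

lemma gaussianReal_prod_eq_map_add (w : ℝ × ℝ) (s t : ℝ≥0) :
    (gaussianReal w.1 s).prod (gaussianReal w.2 t) =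
      ((gaussianReal 0 s).prod (gaussianReal 0 t)).map (· + w) := by
  have shift (m : ℝ) (u : ℝ≥0) : gaussianReal m u = (gaussianReal 0 u).map (· + m) := by
    rw [gaussianReal_map_add_const, zero_add]
  rw [shift w.1, shift w.2, Measure.map_prod_map _ _ (by fun_prop) (by fun_prop)]
  rfl

lemma abs_add_le_mul_abs_add {k δ x y a b : ℝ} (hk₀ : 0 ≤ k) (hk₁ : k ≤ 1)
    (hxy : |x| + |y| ≤ δ) (hab : |b| ≤ k * |a| - δ) : |y + b| ≤ k * |x + a| := by
  have abs_a_le : |a| ≤ |x + a| + |x| := by simpa using abs_sub (x + a) x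
  calc |y + b| ≤ |y| + |b| := abs_add_le y b
    _ ≤ k * |a| - |x| := by linarith
    _ ≤ k * |a| - k * |x| := by gcongr; exact mul_le_of_le_one_left (abs_nonneg x) hk₁
    _ ≤ k * |x + a| := by rw [← mul_sub]; gcongr; linarith

lemma abs_add_abs_le_two {x y : ℝ} (h : x ^ 2 + y ^ 2 ≤ 2) : |x| + |y| ≤ 2 := by
  refine abs_le_of_sq_le_sq' ?_ zero_le_two |>.2
  calc (|x| + |y|) ^ 2 ≤ 2 * (|x| ^ 2 + |y| ^ 2) := add_sq_le
    _ ≤ 2 ^ 2 := by rw [sq_abs, sq_abs]; linarith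

lemma half_lt_gCone {v : ℝ} {w : ℝ × ℝ} (hk : √(v / (1 - v)) ≤ 1)
    (hw : |w.2| ≤ √(v / (1 - v)) * |w.1| - 2) : 1 / 2 < gCone w.1 w.2 v := by
  rw [gCone, ← ENNReal.ofReal_lt_iff_lt_toReal (by norm_num) (measure_ne_top _ _),
    gaussianReal_prod_eq_map_add, Measure.map_apply (by fun_prop)
      (measurableSet_le (by fun_prop) (by fun_prop))]
  refine half_lt_gaussianReal_prod_disc.trans_le (measure_mono fun p hp => ?_)
  exact abs_add_le_mul_abs_add (sqrt_nonneg _) hk (abs_add_abs_le_two hp) hw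

/-- The angles in `(-π, π)` within `a` of `0`, or within `a` below `π`. The angles within `a` above
`-π` are left out: the total length `3 * a` is enough. -/
def doubleSector (a : ℝ) : Set ℝ :=
  Ioo (-a) a ∪ Ioo (π - a) π

lemma measurableSet_doubleSector (a : ℝ) : MeasurableSet (doubleSector a) :=
  measurableSet_Ioo.union measurableSet_Ioo

lemma doubleSector_subset {a : ℝ} (ha : a ≤ π / 2) : doubleSector a ⊆ Ioo (-π) π := by
  have := pi_pos
  exact union_subset (Ioo_subset_Ioo (by linarith) (by linarith))
    (Ioo_subset_Ioo_left (by linarith))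

lemma volume_doubleSector {a : ℝ} (ha₀ : 0 ≤ a) (ha : a ≤ π / 2) :
    volume (doubleSector a) = ENNReal.ofReal (3 * a) := by
  have hdisj : Disjoint (Ioo (-a) a) (Ioo (π - a) π) :=
    Ioo_disjoint_Ioo.2 (by grind)
  rw [doubleSector, measure_union hdisj measurableSet_Ioo, volume_Ioo, volume_Ioo,
    ← ENNReal.ofReal_add (by linarith) (by linarith)]
  ring_nf

lemma gaussianReal_prod_preimage_Ioi_prod_doubleSector {s : ℝ≥0} (hs : s ≠ 0) {c a : ℝ}
    (hc : 0 ≤ c) (ha₀ : 0 ≤ a) (ha : a ≤ π / 2) :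
    ((gaussianReal 0 s).prod (gaussianReal 0 s)) (sqPolarCoord ⁻¹' (Ioi c ×ˢ doubleSector a)) =
      ENNReal.ofReal (1 / (2 * π) * (3 * a) * exp (-(c / (2 * s)))) := by
  rw [gaussianReal_prod_preimage_sqPolarCoord hs measurableSet_Ioi (measurableSet_doubleSector a),
    expMeasure_Ioi (by positivity) hc, inv_mul_eq_div, volume_cond_Ioo_neg_pi_pi_apply,
    inter_eq_right.2 (doubleSector_subset ha), volume_doubleSector ha₀ ha, ← one_div,
    ← ENNReal.ofReal_mul (by positivity), ← ENNReal.ofReal_mul (by positivity), mul_comm (exp _)]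

lemma abs_sin_le_mul_abs_cos_sub {k θ : ℝ} (hk : k ≤ 1) (hθ : |θ| ≤ 3 * k / 8) :
    |sin θ| ≤ k * |cos θ| - k / 2 := by
  have hk₀ : 0 ≤ k := by linarith [abs_nonneg θ]
  have sq_le : θ ^ 2 ≤ (3 / 8) ^ 2 := sq_le_sq.2 (by grind)
  have cos_ge : 7 / 8 ≤ |cos θ| := by
    linarith [one_sub_sq_div_two_le_cos (x := θ), le_abs_self (cos θ)]
  calc |sin θ| ≤ |θ| := abs_sin_le_abs
    _ ≤ k * (7 / 8) - k / 2 := by linarith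
    _ ≤ k * |cos θ| - k / 2 := by gcongr

lemma abs_sin_le_of_mem_doubleSector {k θ : ℝ} (hk : k ≤ 1) (hθ : θ ∈ doubleSector (3 * k / 8)) :
    |sin θ| ≤ k * |cos θ| - k / 2 := by
  rcases hθ with near_zero | near_pi
  · exact abs_sin_le_mul_abs_cos_sub hk (abs_lt.2 near_zero).le
  · rw [← sin_pi_sub, ← abs_neg (cos θ), ← cos_pi_sub]
    exact abs_sin_le_mul_abs_cos_sub hk
      (abs_le.2 ⟨by linarith [near_pi.1, near_pi.2], by linarith [near_pi.1]⟩)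

lemma preimage_sqPolarCoord_subset_cone {k δ : ℝ} (hk₀ : 0 < k) (hk₁ : k ≤ 1) (hδ : 0 ≤ δ) :
    sqPolarCoord ⁻¹' (Ioi ((2 * δ / k) ^ 2) ×ˢ doubleSector (3 * k / 8)) ⊆
      {p | |p.2| ≤ k * |p.1| - δ} := by
  rintro p ⟨hr, hθ⟩
  set r := √(sqPolarCoord p).1
  set θ := (sqPolarCoord p).2
  have polar : p = (r * cos θ, r * sin θ) := eq_sqrt_mul_cos_sin_sqPolarCoord p
  have r_nonneg : 0 ≤ r := sqrt_nonneg _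
  have two_mul_lt : 2 * δ < r * k := (div_lt_iff₀ hk₀).1 ((lt_sqrt (by positivity)).2 hr)
  have scaled := mul_le_mul_of_nonneg_left (abs_sin_le_of_mem_doubleSector hk₁ hθ) r_nonneg
  rw [mem_ofPred_eq, polar, abs_mul, abs_mul, abs_of_nonneg r_nonneg]
  linarith

theorem lt_gaussianReal_prod_cone {s : ℝ≥0} (hs : s ≠ 0) {k δ : ℝ} (hk₀ : 0 < k) (hk₁ : k ≤ 1)
    (hδ : 0 ≤ δ) :
    ENNReal.ofReal (1 / (2 * π) * k * exp (-((2 * δ / k) ^ 2 / (2 * s)))) <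
      ((gaussianReal 0 s).prod (gaussianReal 0 s)) {p | |p.2| ≤ k * |p.1| - δ} := by
  have sector_le : 3 * k / 8 ≤ π / 2 := by linarith [pi_gt_three]
  refine lt_of_lt_of_le ?_ (measure_mono (preimage_sqPolarCoord_subset_cone hk₀ hk₁ hδ))
  rw [gaussianReal_prod_preimage_Ioi_prod_doubleSector hs (by positivity) (by positivity) sector_le,
    ENNReal.ofReal_lt_ofReal_iff (by positivity)]
  gcongr
  linarith

/-- for `0 < v ≤ 1/2`, `0 < ρ < 1` and `W = (W¹,W²)` a pair of independent centered
normals with variance `ρ/(1-ρ)`,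
`P(g_W(v) > 1/2) > (1/(2π))·√(v/(1-v))·exp(-(8(1-ρ)/ρ)·((1-v)/v))`. -/
theorem prob_gCone_gt_half (v ρ : ℝ) (hv0 : 0 < v) (hv : v ≤ 1 / 2)
    (hρ0 : 0 < ρ) (hρ1 : ρ < 1) :
    ENNReal.ofReal
        (1 / (2 * π) * √(v / (1 - v)) * exp (-(8 * (1 - ρ) / ρ) * ((1 - v) / v)))
      < ((gaussianReal 0 (Real.toNNReal (ρ / (1 - ρ)))).prod
            (gaussianReal 0 (Real.toNNReal (ρ / (1 - ρ)))))
          {w : ℝ × ℝ | 1 / 2 < gCone w.1 w.2 v} := by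
  have one_sub_v_pos : 0 < 1 - v := by linarith
  have one_sub_ρ_pos : 0 < 1 - ρ := by linarith
  have ratio_pos : 0 < v / (1 - v) := by positivity
  have var_pos : 0 < ρ / (1 - ρ) := by positivity
  have slope_le_one : √(v / (1 - v)) ≤ 1 := by
    rw [sqrt_le_one, div_le_one one_sub_v_pos]
    linarith
  have exponent_eq : -(8 * (1 - ρ) / ρ) * ((1 - v) / v) =
      -((2 * 2 / √(v / (1 - v))) ^ 2 / (2 * (ρ / (1 - ρ)).toNNReal)) := by
    rw [coe_toNNReal _ var_pos.le, div_pow, sq_sqrt ratio_pos.le]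
    field_simp
    norm_num
  rw [exponent_eq]
  exact (lt_gaussianReal_prod_cone (toNNReal_pos.2 var_pos).ne' (sqrt_pos.2 ratio_pos)
    slope_le_one zero_le_two).trans_le (measure_mono fun w hw => half_lt_gCone slope_le_one hw)

end
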